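/- Let w*_χ(μ0) denote the infimum χ-PBE sender payoff. Then lim_{χ↗1} w*_χ(μ0) = ŵ(μ0). In particular, lim_{χ↗1} w*_χ(μ0) = v̂(μ0) if and only if ŵ(μ0) = v̂(μ0). -/

import Mathlib

open MeasureTheory Filter Topology

/-- A probability vector on a finite set. -/
def IsDist {X : Type*} [Fintype X] (f : X → ℝ) : Prop :=
  (∀ x, 0 ≤ f x) ∧ ∑ x, f x = 1

/-- An experiment (official reporting protocol): a state-contingent distribution over
messages. -/
def IsExperiment {Θ M : Type*} [Fintype M] (ψ : Θ → M → ℝ) : Prop :=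
  ∀ θ, IsDist (ψ θ)

/-- The receiver's best responses `A*_R(μ)` to a belief vector `μ` on a finite state
space. -/
def BRf {A Θ : Type*} [Fintype Θ] (uR : A → Θ → ℝ) (μ : Θ → ℝ) : Set A :=
  {a | ∀ a' : A, ∑ θ, uR a' θ * μ θ ≤ ∑ θ, uR a θ * μ θ}

/-- The belief simplex `ΔΘ` over a finite state space, viewed as a subspace of `ℝ^Θ`. -/
abbrev Belief (Θ : Type*) [Fintype Θ] : Type _ := {f : Θ → ℝ // f ∈ stdSimplex ℝ Θ}

/-- The sender's upper value function `v(μ) = max_{a ∈ A*_R(μ)} u_S(a)` (state-independent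
sender utility). -/
noncomputable def vG {A Θ : Type*} [Fintype Θ] (uS : A → ℝ) (uR : A → Θ → ℝ)
    (μ : Θ → ℝ) : ℝ :=
  sSup (uS '' BRf uR μ)

/-- The sender's lower value function `w(μ) = min_{a ∈ A*_R(μ)} u_S(a)`. -/
noncomputable def wG {A Θ : Type*} [Fintype Θ] (uS : A → ℝ) (uR : A → Θ → ℝ)
    (μ : Θ → ℝ) : ℝ :=
  sInf (uS '' BRf uR μ)

/-- The set `I(μ0)` of information policies: Borel probability measures on the belief
simplex whose barycenter is the prior `μ0`. -/
def IPolF {Θ : Type*} [Fintype Θ] (μ0 : Θ → ℝ) : Set (ProbabilityMeasure (Belief Θ)) :=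
  {p | ∀ θ : Θ, ∫ μ, (μ : Belief Θ).1 θ ∂(p : Measure (Belief Θ)) = μ0 θ}

/-- `v̂(μ0)`: the sender's Bayesian persuasion value. -/
noncomputable def vHatG {A Θ : Type*} [Fintype Θ] (uS : A → ℝ) (uR : A → Θ → ℝ)
    (μ0 : Θ → ℝ) : ℝ :=
  sSup ((fun p : ProbabilityMeasure (Belief Θ) =>
    ∫ μ, vG uS uR (μ : Belief Θ).1 ∂(p : Measure (Belief Θ))) '' IPolF μ0)

/-- `ŵ(μ0)`: the sender's worst equilibrium value under full commitment. -/
noncomputable def wHatG {A Θ : Type*} [Fintype Θ] (uS : A → ℝ) (uR : A → Θ → ℝ)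
    (μ0 : Θ → ℝ) : ℝ :=
  sSup ((fun p : ProbabilityMeasure (Belief Θ) =>
    ∫ μ, wG uS uR (μ : Belief Θ).1 ∂(p : Measure (Belief Θ))) '' IPolF μ0)

/-- The sender's expected payoff in the partial-credibility game from (provisionally)
choosing experiment `ψ'`, given influencing strategy `σ` and receiver strategy `α`. -/
noncomputable def chiValue {A Θ M : Type*} [Fintype A] [Fintype Θ] [Fintype M]
    (uS : A → ℝ) (μ0 : Θ → ℝ) (χ : ℝ)
    (σ : Θ → (Θ → M → ℝ) → M → ℝ) (α : M → (Θ → M → ℝ) → A → ℝ)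
    (ψ' : Θ → M → ℝ) : ℝ :=
  ∑ θ, μ0 θ * ∑ m, (χ * ψ' θ m + (1 - χ) * σ θ ψ' m) * ∑ a, uS a * α m ψ' a

/-- Perfect Bayesian `χ`-equilibrium of the partial-credibility persuasion game. -/
def IsChiPBE {A Θ M : Type*} [Fintype A] [Fintype Θ] [Fintype M]
    (uS : A → ℝ) (uR : A → Θ → ℝ) (μ0 : Θ → ℝ) (χ : ℝ)
    (ψ : Θ → M → ℝ) (σ : Θ → (Θ → M → ℝ) → M → ℝ)
    (α : M → (Θ → M → ℝ) → A → ℝ) (β : M → (Θ → M → ℝ) → Θ → ℝ) : Prop :=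
  IsExperiment ψ ∧
  (∀ ψ' : Θ → M → ℝ, IsExperiment ψ' → ∀ θ, IsDist (σ θ ψ')) ∧
  (∀ ψ' : Θ → M → ℝ, IsExperiment ψ' → ∀ m, IsDist (α m ψ')) ∧
  (∀ ψ' : Θ → M → ℝ, IsExperiment ψ' → ∀ m, IsDist (β m ψ')) ∧
  -- (1) the sender's experiment choice is optimal
  (∀ ψ' : Θ → M → ℝ, IsExperiment ψ' →
    chiValue uS μ0 χ σ α ψ' ≤ chiValue uS μ0 χ σ α ψ) ∧
  -- (2) the receiver best responds to his beliefs
  (∀ ψ' : Θ → M → ℝ, IsExperiment ψ' → ∀ (m : M) (a : A),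
    α m ψ' a ≠ 0 → a ∈ BRf uR (β m ψ')) ∧
  -- (3) beliefs are Bayesian
  (∀ ψ' : Θ → M → ℝ, IsExperiment ψ' → ∀ (m : M) (θ : Θ),
    β m ψ' θ * (∑ θ', μ0 θ' * (χ * ψ' θ' m + (1 - χ) * σ θ' ψ' m)) =
      μ0 θ * (χ * ψ' θ m + (1 - χ) * σ θ ψ' m)) ∧
  -- (4) the influencing sender's message choice is optimal
  (∀ ψ' : Θ → M → ℝ, IsExperiment ψ' → ∀ (θ : Θ) (m : M), σ θ ψ' m ≠ 0 →
    ∀ m' : M, ∑ a, uS a * α m' ψ' a ≤ ∑ a, uS a * α m ψ' a)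

/-- The set of sender `χ`-PBE payoffs. -/
def chiPBEPayoffs (A : Type*) {Θ : Type*} (M : Type*) [Fintype A] [Fintype Θ] [Fintype M]
    (uS : A → ℝ) (uR : A → Θ → ℝ) (μ0 : Θ → ℝ) (χ : ℝ) : Set ℝ :=
  {s | ∃ (ψ : Θ → M → ℝ) (σ : Θ → (Θ → M → ℝ) → M → ℝ)
      (α : M → (Θ → M → ℝ) → A → ℝ) (β : M → (Θ → M → ℝ) → Θ → ℝ),
    IsChiPBE uS uR μ0 χ ψ σ α β ∧ s = chiValue uS μ0 χ σ α ψ}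

/-- `w*_χ(μ0)`: the infimum sender `χ`-PBE payoff. -/
noncomputable def wStar (A : Type*) {Θ : Type*} (M : Type*)
    [Fintype A] [Fintype Θ] [Fintype M]
    (uS : A → ℝ) (uR : A → Θ → ℝ) (μ0 : Θ → ℝ) (χ : ℝ) : ℝ :=
  sInf (chiPBEPayoffs A M uS uR μ0 χ)

/-!
Both bounds are about the lower value `w` extended homogeneously to unnormalised posteriors
(`wCone`), so that splitting the prior into posteriors means writing it as a sum of vectors.

*Lower bound.* Pooling the beliefs with the same best responses and then passing to an optimal
basic solution shows that `|Θ|` messages already attain every value `∫ w dp`. The sender can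
announce such an experiment; since `w` is lower semicontinuous, as credibility tends to `1` the
influencing messages perturb its posteriors too little to matter, uniformly in the influencing
strategy.

*Upper bound.* After every announcement there is a continuation equilibrium in which the
influencing sender babbles, sending `m` with probability `t m` in all states, where `t` maximises
the potential `∑ m, ∫₀^{t m} w`, evaluated along the posteriors that arise as the babbling
probability varies. The sender's value after `m` is then at most the value of `w` at one of these
posteriors. Up to `O(1 - χ)` they average to the prior, so the expected payoff is at most
`ŵ + O(1 - χ)`. The best among the continuation equilibria below this bound is a `χ`-PBE outcome,
as every other announcement has a continuation equilibrium below the bound, hence no better.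
-/
section ProbabilityVectors

variable {X : Type*} [Fintype X]

theorem IsDist.exists_pos {f : X → ℝ} (hf : IsDist f) : ∃ x, 0 < f x := by
  by_contra! h
  exact one_ne_zero (hf.2.symm.trans (le_antisymm (Fintype.sum_nonpos h) (Fintype.sum_nonneg hf.1)))

theorem IsDist.le_sum_mul {f : X → ℝ} (hf : IsDist f) {g : X → ℝ} {c : ℝ}
    (h : ∀ x, f x ≠ 0 → c ≤ g x) : c ≤ ∑ x, g x * f x := by
  calc c = ∑ x, c * f x := by rw [← Finset.mul_sum, hf.2, mul_one]
    _ ≤ ∑ x, g x * f x := Finset.sum_le_sum fun x _ => by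
      by_cases hx : f x = 0
      · rw [hx, mul_zero, mul_zero]
      · exact mul_le_mul_of_nonneg_right (h x hx) (hf.1 x)

theorem IsDist.smul_add_smul {f g : X → ℝ} (hf : IsDist f) (hg : IsDist g) {p q : ℝ}
    (hp : 0 ≤ p) (hq : 0 ≤ q) (hpq : p + q = 1) : IsDist (p • f + q • g) :=
  convex_stdSimplex ℝ X hf hg hp hq hpq

theorem exists_isDist_sum_mul_eq {u : X → ℝ} {S : Set X} {a b : X} (ha : a ∈ S) (hb : b ∈ S)
    {s : ℝ} (hs : s ∈ Set.Icc (u a) (u b)) :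
    ∃ f, IsDist f ∧ (∀ x, f x ≠ 0 → x ∈ S) ∧ ∑ x, u x * f x = s := by
  classical
  rw [← segment_eq_Icc (hs.1.trans hs.2)] at hs
  obtain ⟨p, q, hp, hq, hpq, rfl⟩ := hs
  refine ⟨p • Pi.single a 1 + q • Pi.single b 1,
    IsDist.smul_add_smul (single_mem_stdSimplex ℝ a) (single_mem_stdSimplex ℝ b) hp hq hpq,
    fun x hx => ?_, ?_⟩
  · by_contra hxS
    have hxa : x ≠ a := fun h => hxS (h ▸ ha)
    have hxb : x ≠ b := fun h => hxS (h ▸ hb)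
    simp [hxa, hxb] at hx
  · simp [mul_add, Finset.sum_add_distrib, Pi.single_apply, mul_comm]

theorem isCompact_setOf_isExperiment (Y : Type*) :
    IsCompact {ψ : Y → X → ℝ | IsExperiment ψ} := by
  convert isCompact_univ_pi fun _ : Y => isCompact_stdSimplex ℝ X
  simp [IsExperiment, IsDist, stdSimplex, Set.pi]

theorem exists_isExperiment (Y X : Type*) [Fintype X] [Nonempty X] :
    ∃ ψ : Y → X → ℝ, IsExperiment ψ := by
  classical
  exact ⟨fun _ => Pi.single (Classical.arbitrary X) 1, fun _ => single_mem_stdSimplex ℝ _⟩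

end ProbabilityVectors

section BestResponses

variable {A Θ : Type*} [Fintype Θ] (uR : A → Θ → ℝ)

theorem BRf_nonempty [Finite A] [Nonempty A] (x : Θ → ℝ) : (BRf uR x).Nonempty :=
  Finite.exists_max fun a => ∑ θ, uR a θ * x θ

theorem BRf_smul (x : Θ → ℝ) {c : ℝ} (hc : 0 < c) : BRf uR (c • x) = BRf uR x := by
  ext a
  simp only [BRf, Set.mem_ofPred_eq, Pi.smul_apply, smul_eq_mul, mul_left_comm _ c,
    ← Finset.mul_sum, mul_le_mul_iff_right₀ hc]

theorem isClosed_setOf_mem_BRf (a : A) : IsClosed {x | a ∈ BRf uR x} := by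
  have h : {x | a ∈ BRf uR x} = ⋂ a', {x | ∑ θ, uR a' θ * x θ ≤ ∑ θ, uR a θ * x θ} := by
    ext; simp [BRf]
  rw [h]
  exact isClosed_iInter fun a' => isClosed_le (by fun_prop) (by fun_prop)

theorem eventually_BRf_subset [Finite A] (x : Θ → ℝ) :
    ∀ᶠ y in 𝓝 x, BRf uR y ⊆ BRf uR x := by
  refine (eventually_all.mpr fun a => ?_ : ∀ᶠ y in 𝓝 x, ∀ a, a ∈ BRf uR y → a ∈ BRf uR x)
  by_cases ha : a ∈ BRf uR x
  · exact Eventually.of_forall fun _ _ => ha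
  · filter_upwards [(isClosed_setOf_mem_BRf uR a).isOpen_compl.mem_nhds ha] with y hy h
    exact absurd h hy

end BestResponses

section LowerValue

variable {A Θ : Type*} [Fintype Θ] (uS : A → ℝ) (uR : A → Θ → ℝ)

theorem wG_le [Finite A] {x : Θ → ℝ} {a : A} (ha : a ∈ BRf uR x) : wG uS uR x ≤ uS a :=
  csInf_le (Set.toFinite _).bddBelow ⟨a, ha, rfl⟩

theorem exists_mem_BRf_eq_wG [Finite A] [Nonempty A] (x : Θ → ℝ) :
    ∃ a ∈ BRf uR x, uS a = wG uS uR x :=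
  ((BRf_nonempty uR x).image uS).csInf_mem (Set.toFinite _)

theorem wG_le_wG_of_BRf_subset [Finite A] [Nonempty A] {x y : Θ → ℝ}
    (h : BRf uR y ⊆ BRf uR x) : wG uS uR x ≤ wG uS uR y := by
  obtain ⟨a, ha, hay⟩ := exists_mem_BRf_eq_wG uS uR y
  exact hay ▸ wG_le uS uR (h ha)

theorem abs_wG_le_norm [Fintype A] [Nonempty A] (x : Θ → ℝ) : |wG uS uR x| ≤ ‖uS‖ := by
  obtain ⟨a, -, ha⟩ := exists_mem_BRf_eq_wG uS uR x
  exact ha ▸ norm_le_pi_norm uS a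

theorem wG_smul (x : Θ → ℝ) {c : ℝ} (hc : 0 < c) : wG uS uR (c • x) = wG uS uR x := by
  rw [wG, BRf_smul uR x hc, wG]

theorem isLocalMin_wG [Finite A] [Nonempty A] (x : Θ → ℝ) : IsLocalMin (wG uS uR) x :=
  (eventually_BRf_subset uR x).mono fun _ => wG_le_wG_of_BRf_subset uS uR

theorem lowerSemicontinuous_of_isLocalMin {X : Type*} [TopologicalSpace X] {f : X → ℝ}
    (h : ∀ x, IsLocalMin f x) : LowerSemicontinuous f :=
  fun x _ hc => (h x).mono fun _ => hc.trans_le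

theorem measurable_wG [Finite A] [Nonempty A] : Measurable (wG uS uR) :=
  (lowerSemicontinuous_of_isLocalMin (isLocalMin_wG uS uR)).measurable

/-- The degree-one homogeneous extension of `w` from the simplex to unnormalised beliefs:
`wCone x` is the mass of `x` times the value of `w` at the normalisation of `x`. -/
noncomputable def wCone (x : Θ → ℝ) : ℝ := (∑ θ, x θ) * wG uS uR x

theorem wCone_smul {c : ℝ} (hc : 0 ≤ c) (x : Θ → ℝ) :
    wCone uS uR (c • x) = c * wCone uS uR x := by
  rcases hc.eq_or_lt with rfl | hc
  · simp [wCone]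
  · simp only [wCone, wG_smul uS uR x hc, Pi.smul_apply, smul_eq_mul, ← Finset.mul_sum, mul_assoc]

end LowerValue

section ConicCombinations

variable {ι 𝕜 E : Type*} [Fintype ι] [Field 𝕜] [AddCommGroup E] [Module 𝕜 E]

theorem exists_sum_smul_eq_zero_of_not_linearIndepOn {x : ι → E} {s : Set ι}
    (hs : ¬ LinearIndepOn 𝕜 x s) :
    ∃ a : ι → 𝕜, ∑ i, a i • x i = 0 ∧ a ≠ 0 ∧ Function.support a ⊆ s := by
  classical
  obtain ⟨l, hls, hl0, hl⟩ : ∃ l ∈ Finsupp.supported 𝕜 𝕜 s,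
      Finsupp.linearCombination 𝕜 x l = 0 ∧ l ≠ 0 := by
    simpa [linearIndepOn_iff] using hs
  refine ⟨l, ?_, by simpa using hl, by simpa [Finsupp.mem_supported] using hls⟩
  rwa [Finsupp.linearCombination_apply, Finsupp.sum_fintype _ _ (by simp)] at hl0

variable [LinearOrder 𝕜] [IsStrictOrderedRing 𝕜]

theorem exists_sum_smul_eq_support_ssubset {x : ι → E} {φ : E →ₗ[𝕜] 𝕜} (hφ : ∀ i, 0 < φ (x i))
    (g : ι → 𝕜) {c : ι → 𝕜} (hc : 0 ≤ c) (hdep : ¬ LinearIndepOn 𝕜 x (Function.support c)) :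
    ∃ d : ι → 𝕜, 0 ≤ d ∧ ∑ i, d i • x i = ∑ i, c i • x i ∧
      ∑ i, c i * g i ≤ ∑ i, d i * g i ∧ Function.support d ⊂ Function.support c := by
  classical
  obtain ⟨a, ha0, hane, hasupp, hag⟩ : ∃ a : ι → 𝕜, ∑ i, a i • x i = 0 ∧ a ≠ 0 ∧
      Function.support a ⊆ Function.support c ∧ 0 ≤ ∑ i, a i * g i := by
    obtain ⟨a, ha0, hane, hasupp⟩ := exists_sum_smul_eq_zero_of_not_linearIndepOn hdep
    rcases le_total 0 (∑ i, a i * g i) with h | h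
    · exact ⟨a, ha0, hane, hasupp, h⟩
    · exact ⟨-a, by simp [ha0], neg_ne_zero.mpr hane, by simpa using hasupp, by simpa using h⟩
  have hneg : ∃ i, a i < 0 := by
    by_contra! hnonneg
    have hsum : ∑ i, a i * φ (x i) = 0 := by simpa using congrArg φ ha0
    refine hane (funext fun i => ?_)
    have := (Finset.sum_eq_zero_iff_of_nonneg fun i _ => mul_nonneg (hnonneg i) (hφ i).le).mp
      hsum i (Finset.mem_univ i)
    exact (mul_eq_zero.mp this).resolve_right (hφ i).ne'
  -- Move along `a` until the first weight vanishes.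
  obtain ⟨i₀, hi₀, hmin⟩ := (Finset.univ.filter fun i => a i < 0).exists_min_image
    (fun i => c i / -a i) (by simpa [Finset.Nonempty] using hneg)
  simp only [Finset.mem_filter, Finset.mem_univ, true_and] at hi₀ hmin
  set t := c i₀ / -a i₀
  have ht : 0 ≤ t := div_nonneg (hc i₀) (neg_nonneg.mpr hi₀.le)
  have hvanish : c i₀ + t * a i₀ = 0 := by
    have : t * -a i₀ = c i₀ := div_mul_cancel₀ _ (neg_ne_zero.mpr hi₀.ne)
    rw [← this]
    ring
  refine ⟨c + t • a, fun i => ?_, ?_, ?_, ?_⟩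
  · rcases le_or_gt 0 (a i) with h | h
    · exact add_nonneg (hc i) (mul_nonneg ht h)
    · have := (le_div_iff₀ (neg_pos.mpr h)).mp (hmin i h)
      simp only [Pi.zero_apply, Pi.add_apply, Pi.smul_apply, smul_eq_mul]
      linarith
  · simp [add_smul, Finset.sum_add_distrib, mul_smul, ← Finset.smul_sum, ha0]
  · simpa [add_mul, Finset.sum_add_distrib, mul_assoc, ← Finset.mul_sum] using mul_nonneg ht hag
  · refine (Set.ssubset_iff_of_subset fun i hi => ?_).mpr
      ⟨i₀, hasupp hi₀.ne, by simpa using hvanish⟩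
    by_contra hci
    have hai : a i = 0 := by_contra fun h => hci (hasupp h)
    simp_all

/-- The existence of an optimal basic solution for the linear programme of representing a vector
as a conic combination of the `x i` with the highest total reward. Positivity of `φ` excludes
unbounded improvement. -/
theorem exists_linearIndepOn_support_sum_smul_eq {x : ι → E} {φ : E →ₗ[𝕜] 𝕜}
    (hφ : ∀ i, 0 < φ (x i)) (g : ι → 𝕜) {c : ι → 𝕜} (hc : 0 ≤ c) :
    ∃ d : ι → 𝕜, 0 ≤ d ∧ ∑ i, d i • x i = ∑ i, c i • x i ∧
      ∑ i, c i * g i ≤ ∑ i, d i * g i ∧ LinearIndepOn 𝕜 x (Function.support d) := by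
  induction hn : (Function.support c).ncard using Nat.strong_induction_on generalizing c with
  | _ n ih =>
    by_cases hindep : LinearIndepOn 𝕜 x (Function.support c)
    · exact ⟨c, hc, rfl, le_rfl, hindep⟩
    obtain ⟨d, hd, hdx, hdg, hlt⟩ := exists_sum_smul_eq_support_ssubset hφ g hc hindep
    obtain ⟨e, he, hex, heg, hind⟩ :=
      ih _ (hn ▸ Set.ncard_lt_ncard hlt (Set.toFinite _)) hd rfl
    exact ⟨e, he, hex.trans hdx, hdg.trans heg, hind⟩

theorem exists_sum_smul_eq_of_finrank_le_card [FiniteDimensional 𝕜 E] [Nonempty ι] {κ : Type*}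
    [Fintype κ] (hκ : Module.finrank 𝕜 E ≤ Fintype.card κ) {x : ι → E} {φ : E →ₗ[𝕜] 𝕜}
    (hφ : ∀ i, 0 < φ (x i)) (g : ι → 𝕜) {c : ι → 𝕜} (hc : 0 ≤ c) :
    ∃ (d : κ → 𝕜) (j : κ → ι), 0 ≤ d ∧ ∑ k, d k • x (j k) = ∑ i, c i • x i ∧
      ∑ i, c i * g i ≤ ∑ k, d k * g (j k) := by
  classical
  obtain ⟨d, hd, hdx, hdg, hind⟩ := exists_linearIndepOn_support_sum_smul_eq hφ g hc
  obtain ⟨e⟩ : Nonempty (Function.support d ↪ κ) :=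
    Function.Embedding.nonempty_of_card_le
      ((LinearIndependent.fintype_card_le_finrank hind).trans hκ)
  set d' : κ → 𝕜 := Function.extend e (fun i => d i) 0
  set j : κ → ι := Function.extend e (fun i => i) fun _ => Classical.arbitrary ι
  have hd'e : ∀ i, d' (e i) = d i := e.injective.extend_apply _ _
  have hje : ∀ i, j (e i) = i := e.injective.extend_apply _ _
  have hd'out : ∀ k, k ∉ Set.range e → d' k = 0 := fun k hk => Function.extend_apply' _ _ _ hk
  have hsum : ∑ k, d' k • (x (j k), g (j k)) = ∑ i, d i • (x i, g i) :=
    (Fintype.sum_of_injective e e.injective (fun i => d i • (x i, g i)) _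
      (fun k hk => by rw [hd'out k hk, zero_smul]) fun i => by rw [hd'e, hje]).symm.trans
    (Fintype.sum_of_injective Subtype.val Subtype.val_injective _ (fun i => d i • (x i, g i))
      (fun i hi => by
        have hdi : d i = 0 := by simpa using hi
        rw [hdi, zero_smul]) fun _ => rfl)
  refine ⟨d', j, fun k => ?_, ?_, ?_⟩
  · by_cases hk : k ∈ Set.range e
    · obtain ⟨i, rfl⟩ := hk
      exact hd'e i ▸ hd i
    · exact (hd'out k hk).ge
  · simpa [Prod.fst_sum] using (congrArg Prod.fst hsum).trans (by simpa [Prod.fst_sum] using hdx)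
  · refine hdg.trans_eq ?_
    simpa [Prod.snd_sum] using (congrArg Prod.snd hsum).symm

end ConicCombinations

section Potential

variable {M : Type*} [Fintype M]

theorem sub_le_sub_of_isMaxOn_stdSimplex {F : M → ℝ → ℝ} {t : M → ℝ} (ht : t ∈ stdSimplex ℝ M)
    (hmax : IsMaxOn (fun s => ∑ m, F m (s m)) (stdSimplex ℝ M) t) {m m' : M} (hne : m ≠ m')
    {h : ℝ} (h0 : 0 ≤ h) (hm : h ≤ t m) :
    F m' (t m' + h) - F m' (t m') ≤ F m (t m) - F m (t m - h) := by
  classical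
  set t' := Function.update (Function.update t m (t m - h)) m' (t m' + h) with ht'
  have hm_t' : t' m = t m - h := by simp [ht', hne]
  have hm'_t' : t' m' = t m' + h := by simp [ht']
  have hrest : ∀ k, k ≠ m ∧ k ≠ m' → t' k = t k := fun k hk => by simp [ht', hk.1, hk.2]
  have hchange : ∀ G : M → ℝ → ℝ, ∑ k, G k (t' k) - ∑ k, G k (t k) =
      (G m (t m - h) - G m (t m)) + (G m' (t m' + h) - G m' (t m')) := fun G => by
    rw [← Finset.sum_sub_distrib, Fintype.sum_eq_add m m' hne fun k hk => by
      rw [hrest k hk, sub_self], hm_t', hm'_t']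
  have ht'mem : t' ∈ stdSimplex ℝ M := by
    refine ⟨fun k => ?_, ?_⟩
    · rcases eq_or_ne k m with rfl | hkm
      · linarith
      rcases eq_or_ne k m' with rfl | hkm'
      · linarith [ht.1 k]
      · exact hrest k ⟨hkm, hkm'⟩ ▸ ht.1 k
    · linarith [hchange fun _ s => s, ht.2]
  have hle : ∑ k, F k (t' k) ≤ ∑ k, F k (t k) := hmax ht'mem
  linarith [hchange F]

theorem intervalIntegrable_of_isLocalMin {f : ℝ → ℝ} {K : ℝ} (hK : ∀ t, |f t| ≤ K)
    (hmin : ∀ t, IsLocalMin f t) (a b : ℝ) : IntervalIntegrable f volume a b :=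
  (intervalIntegrable_const (c := K)).mono_fun
    (lowerSemicontinuous_of_isLocalMin hmin).measurable.aestronglyMeasurable
    (Eventually.of_forall fun t => (hK t).trans (le_abs_self K))

/-- Any maximiser of the potential `∑ m, ∫₀^{t m} f m` will do: if the conclusion failed, moving
weight from `m` to `m'` would increase the potential. -/
theorem exists_mem_stdSimplex_frequently_le [Nonempty M] {f : M → ℝ → ℝ}
    (hint : ∀ m a b, IntervalIntegrable (f m) volume a b)
    (hmin : ∀ m t, IsLocalMin (f m) t) :
    ∃ t ∈ stdSimplex ℝ M, ∀ m, 0 < t m → ∀ m',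
      ∃ᶠ τ in 𝓝[Set.Icc 0 1] (t m), f m' (t m') ≤ f m τ := by
  classical
  have hcont : Continuous fun t : M → ℝ => ∑ m, ∫ u in (0:ℝ)..(t m), f m u :=
    continuous_finsetSum _ fun m _ =>
      (intervalIntegral.continuous_primitive (hint m) 0).comp (continuous_apply m)
  obtain ⟨t, ht, hmax⟩ := (isCompact_stdSimplex ℝ M).exists_isMaxOn
    ⟨_, single_mem_stdSimplex ℝ (Classical.arbitrary M)⟩ hcont.continuousOn
  refine ⟨t, ht, fun m hm m' hlt => ?_⟩
  have htm : t m ∈ Set.Icc 0 1 := mem_Icc_of_mem_stdSimplex ht m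
  have hlt : ∀ᶠ τ in 𝓝[Set.Icc 0 1] (t m), f m τ < f m' (t m') := hlt.mono fun _ => lt_of_not_ge
  have hne : m ≠ m' := by
    rintro rfl
    exact lt_irrefl _ (hlt.self_of_nhdsWithin htm)
  obtain ⟨δ, hδ, hδlt⟩ := Metric.mem_nhdsWithin_iff.mp hlt
  obtain ⟨η, hη, hηle⟩ := Metric.eventually_nhds_iff.mp (hmin m' (t m'))
  obtain ⟨h, h0, hh⟩ := exists_between (lt_min (lt_min hδ hη) hm)
  obtain ⟨⟨hhδ, hhη⟩, hhm⟩ : (h < δ ∧ h < η) ∧ h < t m := by simpa only [lt_min_iff] using hh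
  have hgain : h * f m' (t m') ≤ ∫ u in (t m')..(t m' + h), f m' u := by
    have hmono := intervalIntegral.integral_mono_on (a := t m') (b := t m' + h) (by linarith)
      intervalIntegrable_const (hint m' _ _) fun u hu => hηle (y := u) <| by
        rw [Real.dist_eq, abs_lt]
        constructor <;> linarith [hu.1, hu.2]
    simpa using hmono
  have hloss : ∫ u in (t m - h)..(t m), f m u < h * f m' (t m') := by
    have hpos : 0 < ∫ u in (t m - h)..(t m), (f m' (t m') - f m u) :=
      intervalIntegral.intervalIntegral_pos_of_pos_on
        (intervalIntegrable_const.sub (hint m _ _))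
        (fun u hu => sub_pos.mpr <| hδlt ⟨by
            rw [Metric.mem_ball, Real.dist_eq, abs_lt]
            constructor <;> linarith [hu.1, hu.2],
          by linarith [hu.1], by linarith [hu.2, htm.2]⟩)
        (by linarith)
    rw [intervalIntegral.integral_sub intervalIntegrable_const (hint m _ _)] at hpos
    simpa using hpos
  have hmove := sub_le_sub_of_isMaxOn_stdSimplex (F := fun m s => ∫ u in (0:ℝ)..s, f m u)
    ht hmax hne h0.le hhm.le
  rw [intervalIntegral.integral_interval_sub_left (hint m' _ _) (hint m' _ _),
    intervalIntegral.integral_interval_sub_left (hint m _ _) (hint m _ _)] at hmove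
  linarith

end Potential

section InformationPolicies

variable {A Θ : Type*} [Fintype Θ] (uS : A → ℝ) (uR : A → Θ → ℝ)

theorem exists_probabilityMeasure_integral_eq_sum {ι X : Type*} [Fintype ι] [MeasurableSpace X]
    [MeasurableSingletonClass X] {n : ι → ℝ} (hn : IsDist n) (b : ι → X) :
    ∃ p : ProbabilityMeasure X, ∀ g : X → ℝ, ∫ x, g x ∂(p : Measure X) = ∑ i, n i * g (b i) := by
  have hsum : HasSum n 1 := hn.2 ▸ hasSum_fintype n
  refine ⟨⟨_, hsum.isProbabilityMeasure_sum_dirac (d := b) hn.1⟩, fun g => ?_⟩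
  rw [ProbabilityMeasure.coe_mk, integral_sum_dirac fun i => ENNReal.ofReal_ne_top, tsum_fintype]
  simp only [ENNReal.toReal_ofReal (hn.1 _), smul_eq_mul]

theorem exists_belief_sum_smul_eq [Nonempty (Belief Θ)] {x : Θ → ℝ} (hx : 0 ≤ x) :
    ∃ b : Belief Θ, (∑ θ, x θ) • b.1 = x := by
  rcases (Fintype.sum_nonneg hx).eq_or_lt with h | h
  · refine ⟨Classical.arbitrary _, ?_⟩
    rw [← h, zero_smul, (Fintype.sum_eq_zero_iff_of_nonneg hx).mp h.symm]
  · refine ⟨⟨(∑ θ, x θ)⁻¹ • x, fun θ => mul_nonneg (inv_nonneg.mpr h.le) (hx θ), ?_⟩,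
      smul_inv_smul₀ h.ne' x⟩
    simp only [Pi.smul_apply, smul_eq_mul, ← Finset.mul_sum, inv_mul_cancel₀ h.ne']

theorem wCone_belief (b : Belief Θ) : wCone uS uR b.1 = wG uS uR b.1 := by
  rw [wCone, b.2.2, one_mul]

theorem IPolF_nonempty {μ0 : Θ → ℝ} (hμ0 : μ0 ∈ stdSimplex ℝ Θ) : (IPolF μ0).Nonempty :=
  ⟨⟨Measure.dirac ⟨μ0, hμ0⟩, inferInstance⟩, fun θ => by
    rw [ProbabilityMeasure.coe_mk, integral_dirac]⟩

theorem abs_integral_wG_le_norm [Fintype A] [Nonempty A] (p : ProbabilityMeasure (Belief Θ)) :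
    |∫ μ, wG uS uR μ.1 ∂(p : Measure (Belief Θ))| ≤ ‖uS‖ := by
  simpa using norm_integral_le_of_norm_le_const (μ := (p : Measure (Belief Θ)))
    (f := fun μ => wG uS uR μ.1) (Eventually.of_forall fun μ : Belief Θ => abs_wG_le_norm uS uR μ.1)

theorem integral_wG_le_wHatG [Finite A] [Nonempty A] {μ0 : Θ → ℝ}
    {p : ProbabilityMeasure (Belief Θ)} (hp : p ∈ IPolF μ0) :
    ∫ μ, wG uS uR μ.1 ∂(p : Measure (Belief Θ)) ≤ wHatG uS uR μ0 :=
  have := Fintype.ofFinite A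
  le_csSup ⟨‖uS‖, by rintro _ ⟨q, -, rfl⟩; exact (abs_le.mp (abs_integral_wG_le_norm uS uR q)).2⟩
    ⟨p, hp, rfl⟩

theorem abs_wHatG_le_norm [Fintype A] [Nonempty A] {μ0 : Θ → ℝ} (hμ0 : μ0 ∈ stdSimplex ℝ Θ) :
    |wHatG uS uR μ0| ≤ ‖uS‖ := by
  obtain ⟨p, hp⟩ := IPolF_nonempty hμ0
  refine abs_le.mpr ⟨(abs_le.mp (abs_integral_wG_le_norm uS uR p)).1.trans
    (integral_wG_le_wHatG uS uR hp), csSup_le ⟨_, p, hp, rfl⟩ ?_⟩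
  rintro _ ⟨q, -, rfl⟩
  exact (abs_le.mp (abs_integral_wG_le_norm uS uR q)).2

theorem sum_wCone_le_wHatG [Finite A] [Nonempty A] {μ0 : Θ → ℝ} (hμ0 : μ0 ∈ stdSimplex ℝ Θ)
    {ι : Type*} [Fintype ι] {y : ι → Θ → ℝ} (hy : ∀ i, 0 ≤ y i) (hsum : ∑ i, y i = μ0) :
    ∑ i, wCone uS uR (y i) ≤ wHatG uS uR μ0 := by
  have : Nonempty (Belief Θ) := ⟨⟨μ0, hμ0⟩⟩
  choose b hb using fun i => exists_belief_sum_smul_eq (hy i)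
  have hmass : ∀ i, 0 ≤ ∑ θ, y i θ := fun i => Fintype.sum_nonneg (hy i)
  have hdist : IsDist fun i => ∑ θ, y i θ := by
    refine ⟨hmass, ?_⟩
    rw [Finset.sum_comm, ← hμ0.2, ← hsum]
    simp only [Finset.sum_apply]
  obtain ⟨p, hp⟩ := exists_probabilityMeasure_integral_eq_sum hdist b
  have hpol : p ∈ IPolF μ0 := fun θ => by
    rw [hp, ← hsum, Finset.sum_apply]
    exact Finset.sum_congr rfl fun i _ => congrFun (hb i) θ
  calc ∑ i, wCone uS uR (y i) = ∑ i, (∑ θ, y i θ) * wG uS uR (b i).1 :=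
        Finset.sum_congr rfl fun i _ => by
          rw [← wCone_belief, ← wCone_smul uS uR (hmass i), hb]
    _ = ∫ μ, wG uS uR μ.1 ∂(p : Measure (Belief Θ)) :=
        (hp fun μ => wG uS uR μ.1).symm
    _ ≤ wHatG uS uR μ0 := integral_wG_le_wHatG uS uR hpol

theorem sum_wCone_le_mul_wHatG [Finite A] [Nonempty A] {μ0 : Θ → ℝ}
    (hμ0 : μ0 ∈ stdSimplex ℝ Θ) {ι : Type*} [Fintype ι] {y : ι → Θ → ℝ} (hy : ∀ i, 0 ≤ y i)
    {κ : ℝ} (hκ : 0 < κ) (hsum : ∑ i, y i = κ • μ0) :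
    ∑ i, wCone uS uR (y i) ≤ κ * wHatG uS uR μ0 := by
  have h := sum_wCone_le_wHatG uS uR hμ0 (y := fun i => κ⁻¹ • y i)
    (fun i => smul_nonneg (inv_nonneg.mpr hκ.le) (hy i))
    (by rw [← Finset.smul_sum, hsum, inv_smul_smul₀ hκ.ne'])
  simp only [wCone_smul uS uR (inv_nonneg.mpr hκ.le), ← Finset.mul_sum] at h
  exact (inv_mul_le_iff₀ hκ).mp h

end InformationPolicies

section Pooling

variable {A Θ : Type*} [Fintype Θ] (uS : A → ℝ) (uR : A → Θ → ℝ)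

/-- The beliefs at which the receiver's best responses are exactly the actions in `S`. -/
def brCell (S : Set A) : Set (Belief Θ) := {μ | BRf uR μ.1 = S}

/-- The unnormalised belief of a receiver who learns only that a belief drawn from `P` lies in
`brCell uR S`. -/
noncomputable def pooledBelief (P : Measure (Belief Θ)) (S : Set A) : Θ → ℝ :=
  ∫ μ in brCell uR S, μ.1 ∂P

theorem measurableSet_brCell [Finite A] (S : Set A) : MeasurableSet (brCell uR S) := by
  have h : brCell uR S = ⋂ a, {μ : Belief Θ | a ∈ BRf uR μ.1 ↔ a ∈ S} := by
    ext μ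
    simp [brCell, Set.ext_iff]
  rw [h]
  refine MeasurableSet.iInter fun a => ?_
  exact ((isClosed_setOf_mem_BRf uR a).preimage continuous_subtype_val).measurableSet.iff
    (MeasurableSet.const _)

theorem integral_eq_sum_setIntegral_brCell [Finite A] [Fintype (Set A)] {E : Type*}
    [NormedAddCommGroup E] [NormedSpace ℝ E] {P : Measure (Belief Θ)} {f : Belief Θ → E}
    (hf : Integrable f P) : ∫ μ, f μ ∂P = ∑ S, ∫ μ in brCell uR S, f μ ∂P := by
  have hdisj : Pairwise (Function.onFun Disjoint (brCell uR)) := fun S T hST =>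
    Set.disjoint_left.mpr fun μ hS hT => hST (Eq.trans (Eq.symm hS) hT)
  have hcover : ⋃ S, brCell uR S = Set.univ := by
    ext μ
    simp [brCell]
  rw [← integral_iUnion_fintype (measurableSet_brCell uR) hdisj fun S => hf.integrableOn, hcover,
    setIntegral_univ]

variable (P : Measure (Belief Θ)) [IsFiniteMeasure P]

theorem integrable_belief : Integrable (fun μ : Belief Θ => μ.1) P :=
  Integrable.of_bound continuous_subtype_val.aestronglyMeasurable 1
    (Eventually.of_forall fun μ => by simpa using stdSimplex_subset_closedBall μ.2)

theorem integrable_wG [Finite A] [Nonempty A] :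
    Integrable (fun μ : Belief Θ => wG uS uR μ.1) P :=
  have := Fintype.ofFinite A
  Integrable.of_bound ((measurable_wG uS uR).comp measurable_subtype_coe).aestronglyMeasurable ‖uS‖
    (Eventually.of_forall fun μ => abs_wG_le_norm uS uR μ.1)

theorem integrable_sum_mul_belief (c : Θ → ℝ) :
    Integrable (fun μ : Belief Θ => ∑ θ, c θ * μ.1 θ) P :=
  integrable_finsetSum _ fun θ _ => ((integrable_belief P).eval θ).const_mul (c θ)

theorem sum_mul_pooledBelief (S : Set A) (c : Θ → ℝ) :
    ∑ θ, c θ * pooledBelief uR P S θ = ∫ μ in brCell uR S, ∑ θ, c θ * μ.1 θ ∂P := by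
  have hint := (integrable_belief P).integrableOn (s := brCell uR S)
  rw [integral_finsetSum _ fun θ _ => (hint.eval θ).const_mul (c θ)]
  refine Finset.sum_congr rfl fun θ _ => ?_
  rw [pooledBelief, eval_integral hint.eval, integral_const_mul]

theorem pooledBelief_nonneg (S : Set A) : 0 ≤ pooledBelief uR P S := fun θ => by
  rw [pooledBelief, eval_integral (integrable_belief P).integrableOn.eval]
  exact integral_nonneg fun μ => μ.2.1 θ

theorem sum_pooledBelief (S : Set A) :
    ∑ θ, pooledBelief uR P S θ = P.real (brCell uR S) := by
  have h := sum_mul_pooledBelief uR P S 1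
  simp only [Pi.one_apply, one_mul] at h
  rw [h, integral_congr_ae (Eventually.of_forall fun μ => μ.2.2)]
  simp

theorem sum_pooledBelief_eq [Finite A] [Fintype (Set A)] {μ0 : Θ → ℝ}
    {p : ProbabilityMeasure (Belief Θ)} (hp : p ∈ IPolF μ0) :
    ∑ S, pooledBelief uR (p : Measure (Belief Θ)) S = μ0 := by
  have hint := integrable_belief (p : Measure (Belief Θ))
  simp only [pooledBelief]
  rw [← integral_eq_sum_setIntegral_brCell uR hint]
  exact funext fun θ => (eval_integral hint.eval θ).trans (hp θ)

/-- An action outside `S` is strictly worse than one in `S` throughout the cell, hence also on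
average. -/
theorem BRf_pooledBelief_subset [Finite A] [Nonempty A] {S : Set A}
    (hS : P (brCell uR S) ≠ 0) : BRf uR (pooledBelief uR P S) ⊆ S := by
  intro a ha
  by_contra haS
  obtain ⟨ν, hν⟩ := nonempty_of_measure_ne_zero hS
  obtain ⟨b, hb⟩ := BRf_nonempty uR ν.1
  have hbS : b ∈ S := Eq.subset hν hb
  have hpos : ∀ μ ∈ brCell uR S, 0 < ∑ θ, (uR b θ - uR a θ) * μ.1 θ := by
    intro μ hμ
    have hbμ : b ∈ BRf uR μ.1 := Eq.superset hμ hbS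
    have haμ : a ∉ BRf uR μ.1 := fun h => haS (Eq.subset hμ h)
    by_contra! hle
    simp only [sub_mul, Finset.sum_sub_distrib, sub_nonpos] at hle
    exact haμ fun a' => (hbμ a').trans hle
  have hint := (integrable_sum_mul_belief P fun θ => uR b θ - uR a θ).integrableOn
    (s := brCell uR S)
  have hgain : 0 < ∑ θ, (uR b θ - uR a θ) * pooledBelief uR P S θ := by
    rw [sum_mul_pooledBelief, setIntegral_pos_iff_support_of_nonneg_ae
      ((ae_restrict_mem (measurableSet_brCell uR S)).mono fun μ hμ => (hpos μ hμ).le) hint]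
    exact (pos_iff_ne_zero.mpr hS).trans_le (measure_mono fun μ hμ => ⟨(hpos μ hμ).ne', hμ⟩)
  simp only [sub_mul, Finset.sum_sub_distrib, sub_pos] at hgain
  exact (ha b).not_gt hgain

theorem setIntegral_wG_le_wCone_pooledBelief [Finite A] [Nonempty A] (S : Set A) :
    ∫ μ in brCell uR S, wG uS uR μ.1 ∂P ≤ wCone uS uR (pooledBelief uR P S) := by
  rcases eq_or_ne (P (brCell uR S)) 0 with h | h
  · rw [wCone, sum_pooledBelief, measureReal_def, h, Measure.restrict_eq_zero.mpr h]
    simp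
  have hle : ∀ μ ∈ brCell uR S, wG uS uR μ.1 ≤ wG uS uR (pooledBelief uR P S) := fun μ hμ =>
    wG_le_wG_of_BRf_subset uS uR ((BRf_pooledBelief_subset uR P h).trans (Eq.superset hμ))
  calc ∫ μ in brCell uR S, wG uS uR μ.1 ∂P
      ≤ ∫ _ in brCell uR S, wG uS uR (pooledBelief uR P S) ∂P :=
        setIntegral_mono_on (integrable_wG uS uR P).integrableOn integrableOn_const
          (measurableSet_brCell uR S) hle
    _ = wCone uS uR (pooledBelief uR P S) := by
        rw [setIntegral_const, wCone, sum_pooledBelief, smul_eq_mul]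

theorem integral_wG_le_sum_wCone_pooledBelief [Finite A] [Nonempty A] [Fintype (Set A)] :
    ∫ μ, wG uS uR μ.1 ∂P ≤ ∑ S, wCone uS uR (pooledBelief uR P S) := by
  rw [integral_eq_sum_setIntegral_brCell uR (integrable_wG uS uR P)]
  exact Finset.sum_le_sum fun S _ => setIntegral_wG_le_wCone_pooledBelief uS uR P S

end Pooling

section Experiments

variable {A Θ M : Type*}

/-- The joint law `m ↦ θ ↦ μ0 θ * ψ θ m` of state and message under `ψ`, arranged by message, so
that `jointLaw μ0 ψ m` is the unnormalised posterior after `m`. -/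
def jointLaw (μ0 : Θ → ℝ) (ψ : Θ → M → ℝ) (m : M) : Θ → ℝ := fun θ => μ0 θ * ψ θ m

theorem continuous_jointLaw (μ0 : Θ → ℝ) (m : M) : Continuous fun ψ => jointLaw μ0 ψ m :=
  continuous_pi fun θ => by unfold jointLaw; fun_prop

variable [Fintype M]

theorem jointLaw_nonneg {μ0 : Θ → ℝ} (hμ0 : 0 ≤ μ0) {ψ : Θ → M → ℝ}
    (hψ : IsExperiment ψ) (m : M) : 0 ≤ jointLaw μ0 ψ m :=
  fun θ => mul_nonneg (hμ0 θ) ((hψ θ).1 m)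

theorem sum_jointLaw (μ0 : Θ → ℝ) {ψ : Θ → M → ℝ} (hψ : IsExperiment ψ) :
    ∑ m, jointLaw μ0 ψ m = μ0 := by
  ext θ
  simp only [jointLaw, Finset.sum_apply, ← Finset.mul_sum, (hψ θ).2, mul_one]

theorem exists_isExperiment_jointLaw_eq [Nonempty M] {X : M → Θ → ℝ} (hX : ∀ m, 0 ≤ X m) :
    ∃ ψ, IsExperiment ψ ∧ jointLaw (∑ m, X m) ψ = X := by
  classical
  have : Nonempty (Belief M) := ⟨⟨_, single_mem_stdSimplex ℝ (Classical.arbitrary M)⟩⟩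
  choose ψ hψX using fun θ =>
    exists_belief_sum_smul_eq (x := fun m => X m θ) fun m => hX m θ
  refine ⟨fun θ => (ψ θ).1, fun θ => (ψ θ).2, funext fun m => funext fun θ => ?_⟩
  rw [jointLaw, Finset.sum_apply]
  exact congrFun (hψX θ) m

variable [Fintype Θ] [Nonempty M] (uS : A → ℝ) (uR : A → Θ → ℝ)

theorem exists_isExperiment_sum_mul_wG_le (hM : Fintype.card Θ ≤ Fintype.card M) {ι : Type*}
    [Fintype ι] [Nonempty ι] (b : ι → Belief Θ) {c : ι → ℝ} (hc : 0 ≤ c) :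
    ∃ ψ : Θ → M → ℝ, IsExperiment ψ ∧
      ∑ i, c i * wG uS uR (b i).1 ≤ ∑ m, wCone uS uR (jointLaw (∑ i, c i • (b i).1) ψ m) := by
  have hmass : ∀ i, 0 < Fintype.linearCombination ℝ (1 : Θ → ℝ) (b i).1 := fun i => by
    simp [Fintype.linearCombination_apply, (b i).2.2]
  obtain ⟨d, j, hd, hdsum, hdle⟩ := exists_sum_smul_eq_of_finrank_le_card (κ := M)
    (by simpa using hM) hmass (fun i => wG uS uR (b i).1) hc
  obtain ⟨ψ, hψ, hψX⟩ := exists_isExperiment_jointLaw_eq (X := fun m => d m • (b (j m)).1)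
    fun m => smul_nonneg (hd m) (b (j m)).2.1
  refine ⟨ψ, hψ, ?_⟩
  rw [← hdsum, hψX]
  simpa only [wCone_smul uS uR (hd _), wCone_belief] using hdle

theorem exists_isExperiment_integral_wG_le [Finite A] [Nonempty A]
    (hM : Fintype.card Θ ≤ Fintype.card M) {μ0 : Θ → ℝ} (hμ0 : μ0 ∈ stdSimplex ℝ Θ)
    {p : ProbabilityMeasure (Belief Θ)} (hp : p ∈ IPolF μ0) :
    ∃ ψ : Θ → M → ℝ, IsExperiment ψ ∧
      ∫ μ, wG uS uR μ.1 ∂(p : Measure (Belief Θ)) ≤ ∑ m, wCone uS uR (jointLaw μ0 ψ m) := by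
  have := Fintype.ofFinite (Set A)
  have : Nonempty (Belief Θ) := ⟨⟨μ0, hμ0⟩⟩
  set x := pooledBelief uR (p : Measure (Belief Θ))
  have hx : ∀ S, 0 ≤ x S := pooledBelief_nonneg uR _
  choose b hb using fun S => exists_belief_sum_smul_eq (hx S)
  have hmass : ∀ S, 0 ≤ ∑ θ, x S θ := fun S => Fintype.sum_nonneg (hx S)
  obtain ⟨ψ, hψ, hle⟩ := exists_isExperiment_sum_mul_wG_le uS uR hM b hmass
  refine ⟨ψ, hψ, ?_⟩
  calc ∫ μ, wG uS uR μ.1 ∂(p : Measure (Belief Θ)) ≤ ∑ S, wCone uS uR (x S) :=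
        integral_wG_le_sum_wCone_pooledBelief uS uR _
    _ = ∑ S, (∑ θ, x S θ) * wG uS uR (b S).1 := Finset.sum_congr rfl fun S _ => by
        rw [← wCone_belief, ← wCone_smul uS uR (hmass S), hb]
    _ ≤ ∑ m, wCone uS uR (jointLaw (∑ S, (∑ θ, x S θ) • (b S).1) ψ m) := hle
    _ = ∑ m, wCone uS uR (jointLaw μ0 ψ m) := by
        simp only [hb, x, sum_pooledBelief_eq uR hp]

end Experiments

section ContinuationEquilibria

variable {A Θ M : Type*}

/-- The reporting rule actually followed in state `θ`: the official experiment `ψ` with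
probability `χ`, the influencing strategy `s` otherwise. -/
def mixedRule (χ : ℝ) (ψ s : Θ → M → ℝ) : Θ → M → ℝ := χ • ψ + (1 - χ) • s

theorem isExperiment_mixedRule [Fintype M] {χ : ℝ} (hχ : χ ∈ Set.Icc 0 1) {ψ s : Θ → M → ℝ}
    (hψ : IsExperiment ψ) (hs : IsExperiment s) : IsExperiment (mixedRule χ ψ s) :=
  fun θ => (hψ θ).smul_add_smul (hs θ) hχ.1 (sub_nonneg.mpr hχ.2) (add_sub_cancel _ _)

variable [Fintype A] [Fintype Θ]

/-- `α` and `β` are a sequentially rational action and a Bayesian belief of the receiver after a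
message with unnormalised posterior `x`. The Bayes condition is void when `x = 0`. -/
structure IsReply (uR : A → Θ → ℝ) (x : Θ → ℝ) (α : A → ℝ) (β : Θ → ℝ) : Prop where
  isDist_action : IsDist α
  isDist_belief : IsDist β
  mem_BRf : ∀ a, α a ≠ 0 → a ∈ BRf uR β
  bayes : ∀ θ, β θ * ∑ θ', x θ' = x θ

variable (uS : A → ℝ) {uR : A → Θ → ℝ}

theorem IsReply.zero {x : Θ → ℝ} {α : A → ℝ} {β : Θ → ℝ} (h : IsReply uR x α β) :
    IsReply uR 0 α β :=
  ⟨h.isDist_action, h.isDist_belief, h.mem_BRf, fun _ => by simp⟩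

theorem IsReply.wCone_le {x : Θ → ℝ} {α : A → ℝ} {β : Θ → ℝ} (h : IsReply uR x α β)
    (hx : 0 ≤ ∑ θ, x θ) : wCone uS uR x ≤ (∑ θ, x θ) * ∑ a, uS a * α a := by
  have hxβ : (∑ θ, x θ) • β = x := funext fun θ => (mul_comm _ _).trans (h.bayes θ)
  have hβ : wCone uS uR β = wG uS uR β := wCone_belief uS uR ⟨β, h.isDist_belief⟩
  rw [← congrArg (wCone uS uR) hxβ, wCone_smul uS uR hx, hβ]
  exact mul_le_mul_of_nonneg_left
    (h.isDist_action.le_sum_mul fun a ha => wG_le uS uR (h.mem_BRf a ha)) hx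

theorem exists_isReply_sum_mul_eq [Nonempty (Belief Θ)] {x : Θ → ℝ} (hx : 0 ≤ x)
    (hpos : 0 < ∑ θ, x θ) {a b : A} (ha : a ∈ BRf uR x) (hb : b ∈ BRf uR x) {r : ℝ}
    (hr : r ∈ Set.Icc (uS a) (uS b)) :
    ∃ α β, IsReply uR x α β ∧ ∑ a, uS a * α a = r := by
  obtain ⟨β, hβ⟩ := exists_belief_sum_smul_eq hx
  obtain ⟨α, hα, hsupp, hval⟩ := exists_isDist_sum_mul_eq ha hb hr
  have hBR : BRf uR x = BRf uR β.1 := by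
    rw [← BRf_smul uR β.1 hpos, hβ]
  exact ⟨α, β.1, ⟨hα, β.2, fun a ha => hBR ▸ hsupp a ha,
    fun θ => (mul_comm _ _).trans (congrFun hβ θ)⟩, hval⟩

variable [Fintype M]

/-- The sender's expected payoff when messages are generated by the rule `φ` and the receiver
replies to them with `α`. -/
def rulePayoff (μ0 : Θ → ℝ) (φ : Θ → M → ℝ) (α : M → A → ℝ) : ℝ :=
  ∑ θ, μ0 θ * ∑ m, φ θ m * ∑ a, uS a * α m a

theorem rulePayoff_eq_sum (μ0 : Θ → ℝ) (φ : Θ → M → ℝ) (α : M → A → ℝ) :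
    rulePayoff uS μ0 φ α = ∑ m, (∑ θ, jointLaw μ0 φ m θ) * ∑ a, uS a * α m a := by
  simp only [rulePayoff, jointLaw, Finset.mul_sum _ _ (μ0 _), Finset.sum_mul, mul_assoc]
  exact Finset.sum_comm

variable (uR) in
/-- Conditions (2)-(4) of `IsChiPBE` after the announcement of the single experiment `ψ`. -/
structure IsContinuationEq (μ0 : Θ → ℝ) (χ : ℝ) (ψ s : Θ → M → ℝ) (α : M → A → ℝ)
    (β : M → Θ → ℝ) : Prop where
  isExperiment : IsExperiment s
  isReply : ∀ m, IsReply uR (jointLaw μ0 (mixedRule χ ψ s) m) (α m) (β m)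
  optimal : ∀ θ m, s θ m ≠ 0 → ∀ m', ∑ a, uS a * α m' a ≤ ∑ a, uS a * α m a

theorem IsContinuationEq.sum_wCone_le {μ0 : Θ → ℝ} (hμ0 : 0 ≤ μ0) {χ : ℝ}
    (hχ : χ ∈ Set.Icc 0 1) {ψ s : Θ → M → ℝ} (hψ : IsExperiment ψ) {α : M → A → ℝ}
    {β : M → Θ → ℝ} (h : IsContinuationEq uS uR μ0 χ ψ s α β) :
    ∑ m, wCone uS uR (jointLaw μ0 (mixedRule χ ψ s) m) ≤
      rulePayoff uS μ0 (mixedRule χ ψ s) α := by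
  rw [rulePayoff_eq_sum]
  exact Finset.sum_le_sum fun m _ => (h.isReply m).wCone_le uS <| Fintype.sum_nonneg <|
    jointLaw_nonneg hμ0 (isExperiment_mixedRule hχ hψ h.isExperiment) m

theorem exists_isContinuationEq_of_mem_chiPBEPayoffs {μ0 : Θ → ℝ} {χ r : ℝ}
    (hr : r ∈ chiPBEPayoffs A M uS uR μ0 χ) {ψ : Θ → M → ℝ} (hψ : IsExperiment ψ) :
    ∃ (s : Θ → M → ℝ) (α : M → A → ℝ) (β : M → Θ → ℝ),
      IsContinuationEq uS uR μ0 χ ψ s α β ∧ rulePayoff uS μ0 (mixedRule χ ψ s) α ≤ r := by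
  obtain ⟨_, σ, α, β, ⟨-, hσ, hα, hβ, hopt, hBR, hbayes, hinf⟩, rfl⟩ := hr
  exact ⟨fun θ => σ θ ψ, fun m => α m ψ, fun m => β m ψ,
    ⟨hσ ψ hψ, fun m => ⟨hα ψ hψ m, hβ ψ hψ m, hBR ψ hψ m, hbayes ψ hψ m⟩, hinf ψ hψ⟩,
    hopt ψ hψ⟩

theorem rulePayoff_mem_chiPBEPayoffs {μ0 : Θ → ℝ} {χ : ℝ} {ψ s : Θ → M → ℝ} {α : M → A → ℝ}
    {β : M → Θ → ℝ} (hψ : IsExperiment ψ) (hce : IsContinuationEq uS uR μ0 χ ψ s α β)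
    (hdev : ∀ ψ' : Θ → M → ℝ, IsExperiment ψ' →
      ∃ (s' : Θ → M → ℝ) (α' : M → A → ℝ) (β' : M → Θ → ℝ),
        IsContinuationEq uS uR μ0 χ ψ' s' α' β' ∧
          rulePayoff uS μ0 (mixedRule χ ψ' s') α' ≤ rulePayoff uS μ0 (mixedRule χ ψ s) α) :
    rulePayoff uS μ0 (mixedRule χ ψ s) α ∈ chiPBEPayoffs A M uS uR μ0 χ := by
  have hsel : ∀ ψ' : Θ → M → ℝ, ∃ (s' : Θ → M → ℝ) (α' : M → A → ℝ) (β' : M → Θ → ℝ),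
      (IsExperiment ψ' → IsContinuationEq uS uR μ0 χ ψ' s' α' β' ∧
        rulePayoff uS μ0 (mixedRule χ ψ' s') α' ≤ rulePayoff uS μ0 (mixedRule χ ψ s) α) ∧
      (ψ' = ψ → s' = s ∧ α' = α) := by
    intro ψ'
    obtain rfl | hne := eq_or_ne ψ' ψ
    · exact ⟨s, α, β, fun _ => ⟨hce, le_rfl⟩, fun _ => ⟨rfl, rfl⟩⟩
    by_cases hψ' : IsExperiment ψ'
    · obtain ⟨s', α', β', h⟩ := hdev ψ' hψ'
      exact ⟨s', α', β', fun _ => h, fun h => absurd h hne⟩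
    · exact ⟨s, α, β, fun h => absurd h hψ', fun h => absurd h hne⟩
  choose σ α' β' hce' hon_path using hsel
  have hval : rulePayoff uS μ0 (mixedRule χ ψ s) α =
      rulePayoff uS μ0 (mixedRule χ ψ (σ ψ)) (α' ψ) := by
    rw [(hon_path ψ rfl).1, (hon_path ψ rfl).2]
  exact ⟨ψ, fun θ ψ' => σ ψ' θ, fun m ψ' => α' ψ' m, fun m ψ' => β' ψ' m,
    ⟨hψ, fun ψ' h => (hce' ψ' h).1.isExperiment,
      fun ψ' h m => ((hce' ψ' h).1.isReply m).isDist_action,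
      fun ψ' h m => ((hce' ψ' h).1.isReply m).isDist_belief,
      fun ψ' h => (hce' ψ' h).2.trans_eq hval,
      fun ψ' h m => ((hce' ψ' h).1.isReply m).mem_BRf,
      fun ψ' h m => ((hce' ψ' h).1.isReply m).bayes,
      fun ψ' h => (hce' ψ' h).1.optimal⟩, hval⟩

end ContinuationEquilibria

section LowerBound

variable {A Θ M : Type*} [Fintype Θ] [Fintype M] (uS : A → ℝ) (uR : A → Θ → ℝ) {μ0 : Θ → ℝ}

theorem eventually_mass_mul_wG_le_wCone [Finite A] [Nonempty A] (x : Θ → ℝ) :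
    ∀ᶠ y in 𝓝 x, 0 ≤ y → (∑ θ, y θ) * wG uS uR x ≤ wCone uS uR y :=
  (isLocalMin_wG uS uR x).mono fun _ hle hy =>
    mul_le_mul_of_nonneg_left hle (Fintype.sum_nonneg hy)

theorem eventually_lt_sum_wCone_jointLaw [Finite A] [Nonempty A] (hμ0 : 0 ≤ μ0)
    {ψ : Θ → M → ℝ} {c : ℝ} (hc : c < ∑ m, wCone uS uR (jointLaw μ0 ψ m)) :
    ∀ᶠ η in 𝓝 ψ, IsExperiment η → c < ∑ m, wCone uS uR (jointLaw μ0 η m) := by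
  have hlaw := fun m : M => continuous_jointLaw μ0 m
  have hcont : Continuous fun η : Θ → M → ℝ =>
      ∑ m, (∑ θ, jointLaw μ0 η m θ) * wG uS uR (jointLaw μ0 ψ m) := by fun_prop
  filter_upwards [hcont.continuousAt.eventually (lt_mem_nhds hc), eventually_all.mpr fun m =>
    (hlaw m).continuousAt.eventually (eventually_mass_mul_wG_le_wCone uS uR (jointLaw μ0 ψ m))]
    with η hlt hle hη
  exact hlt.trans_le (Finset.sum_le_sum fun m _ => hle m (jointLaw_nonneg hμ0 hη m))

theorem eventually_lt_sum_wCone_mixedRule [Finite A] [Nonempty A] (hμ0 : 0 ≤ μ0)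
    {ψ : Θ → M → ℝ} (hψ : IsExperiment ψ) {c : ℝ}
    (hc : c < ∑ m, wCone uS uR (jointLaw μ0 ψ m)) :
    ∀ᶠ χ in 𝓝[Set.Icc 0 1] (1 : ℝ), ∀ s : Θ → M → ℝ, IsExperiment s →
      c < ∑ m, wCone uS uR (jointLaw μ0 (mixedRule χ ψ s) m) := by
  have hcont : Continuous fun z : ℝ × (Θ → M → ℝ) => mixedRule z.1 ψ z.2 := by
    unfold mixedRule; fun_prop
  have hone : ∀ s, mixedRule 1 ψ s = ψ := fun s => by simp [mixedRule]
  have hnear : ∀ᶠ χ in 𝓝 (1 : ℝ), ∀ s ∈ {s : Θ → M → ℝ | IsExperiment s},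
      IsExperiment (mixedRule χ ψ s) →
        c < ∑ m, wCone uS uR (jointLaw μ0 (mixedRule χ ψ s) m) :=
    (isCompact_setOf_isExperiment Θ).eventually_forall_of_forall_eventually fun s _ =>
      (hcont.tendsto' (1, s) ψ (hone s)).eventually
        (eventually_lt_sum_wCone_jointLaw uS uR hμ0 hc)
  filter_upwards [nhdsWithin_le_nhds hnear, self_mem_nhdsWithin] with χ h hχ s hs
  exact h s hs (isExperiment_mixedRule hχ hψ hs)

theorem eventually_forall_mem_chiPBEPayoffs_lt [Fintype A] [Nonempty A]
    (hM : Fintype.card Θ ≤ Fintype.card M) (hμ0 : μ0 ∈ stdSimplex ℝ Θ) {c : ℝ}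
    (hc : c < wHatG uS uR μ0) :
    ∀ᶠ χ in 𝓝[Set.Icc 0 1] (1 : ℝ), ∀ r ∈ chiPBEPayoffs A M uS uR μ0 χ, c < r := by
  have : Nonempty Θ := (IsDist.exists_pos hμ0).nonempty
  have : Nonempty M := Fintype.card_pos_iff.mp (Fintype.card_pos.trans_le hM)
  obtain ⟨_, ⟨p, hp, rfl⟩, hcp⟩ := exists_lt_of_lt_csSup ((IPolF_nonempty hμ0).image _) hc
  obtain ⟨ψ, hψ, hpψ⟩ := exists_isExperiment_integral_wG_le uS uR hM hμ0 hp
  filter_upwards [eventually_lt_sum_wCone_mixedRule uS uR hμ0.1 hψ (hcp.trans_le hpψ),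
    self_mem_nhdsWithin] with χ hlt hχ r hr
  obtain ⟨s, α, β, hce, hle⟩ := exists_isContinuationEq_of_mem_chiPBEPayoffs uS hr hψ
  exact (hlt s hce.isExperiment).trans_le ((hce.sum_wCone_le uS hμ0.1 hχ hψ).trans hle)

end LowerBound

section Babbling

variable {Θ M : Type*}

/-- The unnormalised posterior after `m` when `ψ` is official and an influencing sender announces
`m` with probability `τ` in every state. -/
def babbleLaw (μ0 : Θ → ℝ) (χ : ℝ) (ψ : Θ → M → ℝ) (m : M) (τ : ℝ) : Θ → ℝ :=
  χ • jointLaw μ0 ψ m + ((1 - χ) * τ) • μ0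

theorem jointLaw_mixedRule_const (μ0 : Θ → ℝ) (χ : ℝ) (ψ : Θ → M → ℝ) (t : M → ℝ) (m : M) :
    jointLaw μ0 (mixedRule χ ψ fun _ => t) m = babbleLaw μ0 χ ψ m (t m) := by
  ext θ
  simp only [jointLaw, mixedRule, babbleLaw, Pi.add_apply, Pi.smul_apply, smul_eq_mul]
  ring

variable {μ0 : Θ → ℝ} {χ : ℝ} {ψ : Θ → M → ℝ}

theorem babbleLaw_mass [Fintype Θ] (hμ0 : μ0 ∈ stdSimplex ℝ Θ) (m : M) (τ : ℝ) :
    ∑ θ, babbleLaw μ0 χ ψ m τ θ = χ * ∑ θ, jointLaw μ0 ψ m θ + (1 - χ) * τ := by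
  simp only [babbleLaw, Pi.add_apply, Pi.smul_apply, smul_eq_mul, Finset.sum_add_distrib,
    ← Finset.mul_sum, hμ0.2, mul_one]

variable [Fintype M]

theorem sum_babbleLaw (hψ : IsExperiment ψ) (τ : M → ℝ) :
    ∑ m, babbleLaw μ0 χ ψ m (τ m) = (χ + (1 - χ) * ∑ m, τ m) • μ0 := by
  simp only [babbleLaw, Finset.sum_add_distrib, ← Finset.smul_sum, ← Finset.sum_smul,
    ← Finset.mul_sum, sum_jointLaw μ0 hψ, add_smul]

theorem babbleLaw_nonneg (hμ0 : 0 ≤ μ0) (hχ : χ ∈ Set.Icc 0 1) (hψ : IsExperiment ψ) (m : M)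
    {τ : ℝ} (hτ : 0 ≤ τ) : 0 ≤ babbleLaw μ0 χ ψ m τ :=
  add_nonneg (smul_nonneg hχ.1 (jointLaw_nonneg hμ0 hψ m))
    (smul_nonneg (mul_nonneg (sub_nonneg.mpr hχ.2) hτ) hμ0)

end Babbling

section UpperBound

variable {A Θ M : Type*} [Fintype Θ] [Fintype M] (uS : A → ℝ) (uR : A → Θ → ℝ)
  {μ0 : Θ → ℝ} {χ : ℝ} {ψ : Θ → M → ℝ}

theorem exists_mem_stdSimplex_le_wG [Finite A] [Nonempty A] [Nonempty M]
    {Y : M → ℝ → Θ → ℝ} (hY : ∀ m, Continuous (Y m)) :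
    ∃ t ∈ stdSimplex ℝ M, ∃ u : M → ℝ, (∀ m, 0 < t m → ∀ m', u m' ≤ u m) ∧
      ∀ m, ∃ a ∈ BRf uR (Y m (t m)), ∃ b ∈ BRf uR (Y m (t m)), u m ∈ Set.Icc (uS a) (uS b) ∧
        ∃ τ ∈ Set.Icc (0 : ℝ) 1, u m ≤ wG uS uR (Y m τ) := by
  have := Fintype.ofFinite A
  have hmin : ∀ m τ, IsLocalMin (fun τ => wG uS uR (Y m τ)) τ := fun m τ =>
    (isLocalMin_wG uS uR (Y m τ)).comp_continuous (hY m).continuousAt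
  obtain ⟨t, ht, hfreq⟩ := exists_mem_stdSimplex_frequently_le
    (fun m => intervalIntegrable_of_isLocalMin (fun _ => abs_wG_le_norm uS uR _) (hmin m)) hmin
  obtain ⟨k, hk⟩ := Finite.exists_max fun m => wG uS uR (Y m (t m))
  classical
  refine ⟨t, ht, fun m => if 0 < t m then wG uS uR (Y k (t k)) else wG uS uR (Y m (t m)),
    fun m hm m' => ?_, fun m => ?_⟩ <;> dsimp only
  · rw [if_pos hm]
    split_ifs
    exacts [le_rfl, hk m']
  obtain ⟨a, ha, hau⟩ := exists_mem_BRf_eq_wG uS uR (Y m (t m))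
  split_ifs with hm
  · have hBR : ∀ᶠ τ in 𝓝[Set.Icc 0 1] (t m), BRf uR (Y m τ) ⊆ BRf uR (Y m (t m)) :=
      nhdsWithin_le_nhds ((hY m).continuousAt.eventually (eventually_BRf_subset uR (Y m (t m))))
    obtain ⟨τ, hle, hsub, hτ⟩ :=
      ((hfreq m hm k).and_eventually (hBR.and self_mem_nhdsWithin)).exists
    obtain ⟨b, hb, hbu⟩ := exists_mem_BRf_eq_wG uS uR (Y m τ)
    exact ⟨a, ha, b, hsub hb, ⟨hau.trans_le (hk m), hle.trans_eq hbu.symm⟩, τ, hτ, hle⟩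
  · exact ⟨a, ha, a, ha, ⟨hau.le, hau.ge⟩, t m, mem_Icc_of_mem_stdSimplex ht m, le_rfl⟩

theorem exists_isContinuationEq_babbleLaw [Fintype A] [Nonempty A] [Nonempty M]
    (hμ0 : μ0 ∈ stdSimplex ℝ Θ) (hχ : χ ∈ Set.Ico 0 1) (hψ : IsExperiment ψ) :
    ∃ (t : M → ℝ) (α : M → A → ℝ) (β : M → Θ → ℝ),
      IsContinuationEq uS uR μ0 χ ψ (fun _ => t) α β ∧
      ∀ m, 0 < ∑ θ, babbleLaw μ0 χ ψ m (t m) θ →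
        ∃ τ ∈ Set.Icc (0 : ℝ) 1, ∑ a, uS a * α m a ≤ wG uS uR (babbleLaw μ0 χ ψ m τ) := by
  have : Nonempty (Belief Θ) := ⟨⟨μ0, hμ0⟩⟩
  obtain ⟨t, ht, u, hu, hBR⟩ := exists_mem_stdSimplex_le_wG uS uR (Y := babbleLaw μ0 χ ψ)
    fun m => by unfold babbleLaw; fun_prop
  have hx : ∀ m, 0 ≤ babbleLaw μ0 χ ψ m (t m) := fun m =>
    babbleLaw_nonneg hμ0.1 ⟨hχ.1, hχ.2.le⟩ hψ m (ht.1 m)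
  have hmass : ∀ m, 0 < t m → 0 < ∑ θ, babbleLaw μ0 χ ψ m (t m) θ := fun m hm => by
    rw [babbleLaw_mass hμ0]
    exact add_pos_of_nonneg_of_pos
      (mul_nonneg hχ.1 (Fintype.sum_nonneg (jointLaw_nonneg hμ0.1 hψ m)))
      (mul_pos (sub_pos.mpr hχ.2) hm)
  have hreply : ∀ m, 0 < ∑ θ, babbleLaw μ0 χ ψ m (t m) θ →
      ∃ α β, IsReply uR (babbleLaw μ0 χ ψ m (t m)) α β ∧ ∑ a, uS a * α a = u m := fun m hm => by
    obtain ⟨a, ha, b, hb, hab, -⟩ := hBR m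
    exact exists_isReply_sum_mul_eq uS (hx m) hm ha hb hab
  obtain ⟨k, hk⟩ := IsDist.exists_pos ht
  -- After a message of probability zero the receiver replies as he does after `k`.
  have hreply' : ∀ m, ∃ α β, IsReply uR (babbleLaw μ0 χ ψ m (t m)) α β ∧
      (∑ a, uS a * α a ≤ u k) ∧
      (0 < ∑ θ, babbleLaw μ0 χ ψ m (t m) θ → ∑ a, uS a * α a = u m) := fun m => by
    rcases (Fintype.sum_nonneg (hx m)).eq_or_lt with hm | hm
    · obtain ⟨α, β, h, hval⟩ := hreply k (hmass k hk)
      rw [(Fintype.sum_eq_zero_iff_of_nonneg (hx m)).mp hm.symm]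
      exact ⟨α, β, h.zero, hval.le, fun h0 => absurd h0 (by simp)⟩
    · obtain ⟨α, β, h, hval⟩ := hreply m hm
      exact ⟨α, β, h, hval.trans_le (hu k hk m), fun _ => hval⟩
  choose α β hαβ hle heq using hreply'
  refine ⟨t, α, β, ⟨fun _ => ht, fun m => jointLaw_mixedRule_const μ0 χ ψ t m ▸ hαβ m,
    fun _ m hm m' => ?_⟩, fun m hm => ?_⟩
  · have hm : 0 < t m := (ht.1 m).lt_of_ne' hm
    exact (hle m').trans ((hu m hm k).trans_eq (heq m (hmass m hm)).symm)
  · obtain ⟨-, -, -, -, -, τ, hτ, hle⟩ := hBR m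
    exact ⟨τ, hτ, (heq m hm).trans_le hle⟩

theorem mass_mul_le_wCone_babbleLaw_add [Fintype A] [Nonempty A] (hμ0 : μ0 ∈ stdSimplex ℝ Θ)
    (hχ : χ ∈ Set.Icc 0 1) (hψ : IsExperiment ψ) {m : M} {t τ r : ℝ} (ht : 0 ≤ t) (hτ : 0 ≤ τ)
    (hr : r ≤ wG uS uR (babbleLaw μ0 χ ψ m τ)) :
    (∑ θ, babbleLaw μ0 χ ψ m t θ) * r ≤
      wCone uS uR (babbleLaw μ0 χ ψ m τ) + (1 - χ) * (t + τ) * ‖uS‖ := by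
  have hχ' : 0 ≤ 1 - χ := sub_nonneg.mpr hχ.2
  have hmass : 0 ≤ ∑ θ, babbleLaw μ0 χ ψ m t θ :=
    Fintype.sum_nonneg (babbleLaw_nonneg hμ0.1 hχ hψ m ht)
  obtain ⟨hlow, hup⟩ := abs_le.mp (abs_wG_le_norm uS uR (babbleLaw μ0 χ ψ m τ))
  refine (mul_le_mul_of_nonneg_left hr hmass).trans ?_
  rw [wCone, babbleLaw_mass hμ0, babbleLaw_mass hμ0]
  linarith [mul_le_mul_of_nonneg_left hup (mul_nonneg hχ' ht),
    mul_le_mul_of_nonneg_left hlow (mul_nonneg hχ' hτ)]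

theorem sum_mass_mul_le_wHatG_add [Fintype A] [Nonempty A] (hμ0 : μ0 ∈ stdSimplex ℝ Θ)
    (hχ : χ ∈ Set.Ioo 0 1) (hψ : IsExperiment ψ) {t τ r : M → ℝ} (ht : IsDist t)
    (hτ : ∀ m, τ m ∈ Set.Icc 0 1)
    (hr : ∀ m, (∑ θ, babbleLaw μ0 χ ψ m (t m) θ) * r m ≤
      wCone uS uR (babbleLaw μ0 χ ψ m (τ m)) + (1 - χ) * (t m + τ m) * ‖uS‖) :
    ∑ m, (∑ θ, babbleLaw μ0 χ ψ m (t m) θ) * r m ≤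
      wHatG uS uR μ0 + (1 - χ) * (2 * (1 + Fintype.card M) * ‖uS‖) := by
  have hχ1 : 0 ≤ 1 - χ := sub_nonneg.mpr hχ.2.le
  have hτ0 : 0 ≤ ∑ m, τ m := Fintype.sum_nonneg fun m => (hτ m).1
  have hτcard : ∑ m, τ m ≤ Fintype.card M := by
    simpa using Finset.sum_le_sum fun m (_ : m ∈ Finset.univ) => (hτ m).2
  have hcone : ∑ m, wCone uS uR (babbleLaw μ0 χ ψ m (τ m)) ≤
      (χ + (1 - χ) * ∑ m, τ m) * wHatG uS uR μ0 :=
    sum_wCone_le_mul_wHatG uS uR hμ0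
      (fun m => babbleLaw_nonneg hμ0.1 (Set.Ioo_subset_Icc_self hχ) hψ m (hτ m).1)
      (add_pos_of_pos_of_nonneg hχ.1 (mul_nonneg hχ1 hτ0)) (sum_babbleLaw hψ τ)
  have hW : ((∑ m, τ m) - 1) * wHatG uS uR μ0 ≤ (1 + ∑ m, τ m) * ‖uS‖ := by
    obtain ⟨hlow, hup⟩ := abs_le.mp (abs_wHatG_le_norm uS uR hμ0)
    linarith [mul_le_mul_of_nonneg_left hup hτ0]
  calc ∑ m, (∑ θ, babbleLaw μ0 χ ψ m (t m) θ) * r m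
      ≤ ∑ m, (wCone uS uR (babbleLaw μ0 χ ψ m (τ m)) + (1 - χ) * (t m + τ m) * ‖uS‖) :=
        Finset.sum_le_sum fun m _ => hr m
    _ = ∑ m, wCone uS uR (babbleLaw μ0 χ ψ m (τ m)) + (1 - χ) * ((1 + ∑ m, τ m) * ‖uS‖) := by
        rw [Finset.sum_add_distrib, ← Finset.sum_mul, ← Finset.mul_sum, Finset.sum_add_distrib,
          ht.2, mul_assoc]
    _ ≤ wHatG uS uR μ0 + (1 - χ) * (((∑ m, τ m) - 1) * wHatG uS uR μ0 +
          (1 + ∑ m, τ m) * ‖uS‖) := by linarith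
    _ ≤ wHatG uS uR μ0 + (1 - χ) * (2 * (1 + ∑ m, τ m) * ‖uS‖) := by
        gcongr
        linarith
    _ ≤ wHatG uS uR μ0 + (1 - χ) * (2 * (1 + Fintype.card M) * ‖uS‖) := by gcongr

theorem exists_isContinuationEq_rulePayoff_le [Fintype A] [Nonempty A] [Nonempty M]
    (hμ0 : μ0 ∈ stdSimplex ℝ Θ) (hχ : χ ∈ Set.Ioo 0 1) (hψ : IsExperiment ψ) :
    ∃ (s : Θ → M → ℝ) (α : M → A → ℝ) (β : M → Θ → ℝ),
      IsContinuationEq uS uR μ0 χ ψ s α β ∧ rulePayoff uS μ0 (mixedRule χ ψ s) α ≤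
        wHatG uS uR μ0 + (1 - χ) * (2 * (1 + Fintype.card M) * ‖uS‖) := by
  have hχ' : χ ∈ Set.Icc (0 : ℝ) 1 := Set.Ioo_subset_Icc_self hχ
  have : Nonempty Θ := (IsDist.exists_pos hμ0).nonempty
  obtain ⟨t, α, β, hce, hle⟩ := exists_isContinuationEq_babbleLaw uS uR hμ0 ⟨hχ.1.le, hχ.2⟩ hψ
  have ht : IsDist t := hce.isExperiment (Classical.arbitrary Θ)
  have hbound : ∀ m, ∃ τ ∈ Set.Icc (0 : ℝ) 1,
      (∑ θ, babbleLaw μ0 χ ψ m (t m) θ) * ∑ a, uS a * α m a ≤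
        wCone uS uR (babbleLaw μ0 χ ψ m τ) + (1 - χ) * (t m + τ) * ‖uS‖ := fun m => by
    rcases (Fintype.sum_nonneg (babbleLaw_nonneg hμ0.1 hχ' hψ m (ht.1 m))).eq_or_lt with hm | hm
    · refine ⟨t m, mem_Icc_of_mem_stdSimplex ht m, ?_⟩
      rw [wCone, ← hm, zero_mul, zero_mul, zero_add]
      exact mul_nonneg (mul_nonneg (sub_nonneg.mpr hχ'.2) (add_nonneg (ht.1 m) (ht.1 m)))
        (norm_nonneg _)
    · obtain ⟨τ, hτ, hr⟩ := hle m hm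
      exact ⟨τ, hτ, mass_mul_le_wCone_babbleLaw_add uS uR hμ0 hχ' hψ (ht.1 m) hτ.1 hr⟩
  choose τ hτ hbound using hbound
  refine ⟨_, α, β, hce, ?_⟩
  simp only [rulePayoff_eq_sum, jointLaw_mixedRule_const]
  exact sum_mass_mul_le_wHatG_add uS uR hμ0 hχ hψ ht hτ hbound

end UpperBound

section Existence

variable {A Θ M : Type*} [Fintype A] [Fintype Θ] [Fintype M] (uS : A → ℝ) (uR : A → Θ → ℝ)

theorem isClosed_setOf_isReply {Z : Type*} [TopologicalSpace Z] {x : Z → Θ → ℝ} {α : Z → A → ℝ}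
    {β : Z → Θ → ℝ} (hx : Continuous x) (hα : Continuous α) (hβ : Continuous β) :
    IsClosed {z | IsReply uR (x z) (α z) (β z)} := by
  have hset : {z | IsReply uR (x z) (α z) (β z)} =
      {z | α z ∈ stdSimplex ℝ A} ∩ {z | β z ∈ stdSimplex ℝ Θ} ∩
        {z | ∀ a a', α z a = 0 ∨ ∑ θ, uR a' θ * β z θ ≤ ∑ θ, uR a θ * β z θ} ∩
        {z | ∀ θ, β z θ * ∑ θ', x z θ' = x z θ} := by
    ext z
    simp only [Set.mem_inter_iff, Set.mem_ofPred_eq, or_iff_not_imp_left]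
    exact ⟨fun h => ⟨⟨⟨h.1, h.2⟩, fun a a' ha => h.3 a ha a'⟩, h.4⟩,
      fun ⟨⟨⟨h1, h2⟩, h3⟩, h4⟩ => ⟨h1, h2, fun a ha a' => h3 a a' ha, h4⟩⟩
  rw [hset]
  refine ((((isClosed_stdSimplex ℝ A).preimage hα).inter
    ((isClosed_stdSimplex ℝ Θ).preimage hβ)).inter ?_).inter ?_
  · simp only [Set.ofPred_forall, Set.ofPred_or]
    exact isClosed_iInter fun a => isClosed_iInter fun a' =>
      (isClosed_eq (by fun_prop) (by fun_prop)).union (isClosed_le (by fun_prop) (by fun_prop))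
  · simp only [Set.ofPred_forall]
    exact isClosed_iInter fun θ => isClosed_eq (by fun_prop) (by fun_prop)

theorem continuous_rulePayoff (μ0 : Θ → ℝ) (χ : ℝ) :
    Continuous fun e : (Θ → M → ℝ) × (Θ → M → ℝ) × (M → A → ℝ) × (M → Θ → ℝ) =>
      rulePayoff uS μ0 (mixedRule χ e.1 e.2.1) e.2.2.1 := by
  unfold rulePayoff mixedRule
  fun_prop

theorem isCompact_setOf_isContinuationEq (μ0 : Θ → ℝ) (χ b : ℝ) :
    IsCompact {e : (Θ → M → ℝ) × (Θ → M → ℝ) × (M → A → ℝ) × (M → Θ → ℝ) |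
      IsExperiment e.1 ∧ IsContinuationEq uS uR μ0 χ e.1 e.2.1 e.2.2.1 e.2.2.2 ∧
        rulePayoff uS μ0 (mixedRule χ e.1 e.2.1) e.2.2.1 ≤ b} := by
  have hexp := isCompact_setOf_isExperiment (X := M) Θ
  have hreply : ∀ m, IsClosed {e : (Θ → M → ℝ) × (Θ → M → ℝ) × (M → A → ℝ) × (M → Θ → ℝ) |
      IsReply uR (jointLaw μ0 (mixedRule χ e.1 e.2.1) m) (e.2.2.1 m) (e.2.2.2 m)} := fun m =>
    isClosed_setOf_isReply uR ((continuous_jointLaw μ0 m).comp (by unfold mixedRule; fun_prop))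
      (by fun_prop) (by fun_prop)
  have hopt : ∀ θ m m', IsClosed {e : (Θ → M → ℝ) × (Θ → M → ℝ) × (M → A → ℝ) × (M → Θ → ℝ) |
      e.2.1 θ m = 0 ∨ ∑ a, uS a * e.2.2.1 m' a ≤ ∑ a, uS a * e.2.2.1 m a} := fun θ m m' => by
    rw [Set.ofPred_or]
    exact (isClosed_eq (by fun_prop) (by fun_prop)).union
      (isClosed_le (by fun_prop) (by fun_prop))
  have hcompact := hexp.prod (hexp.prod ((isCompact_setOf_isExperiment (X := A) M).prod
    (isCompact_setOf_isExperiment (X := Θ) M)))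
  convert hcompact.inter_right ((isClosed_iInter hreply).inter ((isClosed_iInter fun θ =>
    isClosed_iInter fun m => isClosed_iInter (hopt θ m)).inter
    (isClosed_le (continuous_rulePayoff uS μ0 χ) (continuous_const (y := b))))) using 1
  ext e
  simp only [Set.mem_inter_iff, Set.mem_iInter, Set.mem_ofPred_eq, Set.mem_prod,
    or_iff_not_imp_left]
  exact ⟨fun ⟨hψ, h, hb⟩ => ⟨⟨hψ, h.1, fun m => (h.2 m).1, fun m => (h.2 m).2⟩, h.2,
      fun θ m m' hm => h.3 θ m hm m', hb⟩,
    fun ⟨⟨hψ, hs, _⟩, hr, ho, hb⟩ => ⟨hψ, ⟨hs, hr, fun θ m hm m' => ho θ m m' hm⟩, hb⟩⟩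

theorem exists_mem_chiPBEPayoffs_le [Nonempty A] [Nonempty M] {μ0 : Θ → ℝ}
    (hμ0 : μ0 ∈ stdSimplex ℝ Θ) {χ : ℝ} (hχ : χ ∈ Set.Ioo 0 1) :
    ∃ r ∈ chiPBEPayoffs A M uS uR μ0 χ,
      r ≤ wHatG uS uR μ0 + (1 - χ) * (2 * (1 + Fintype.card M) * ‖uS‖) := by
  obtain ⟨ψ₀, hψ₀⟩ := exists_isExperiment Θ M
  obtain ⟨s₀, α₀, β₀, h₀⟩ := exists_isContinuationEq_rulePayoff_le uS uR hμ0 hχ hψ₀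
  obtain ⟨⟨ψ, s, α, β⟩, ⟨hψ, hce, hle⟩, hmax⟩ :=
    (isCompact_setOf_isContinuationEq uS uR μ0 χ _).exists_isMaxOn ⟨(ψ₀, s₀, α₀, β₀), hψ₀, h₀⟩
      (continuous_rulePayoff uS μ0 χ).continuousOn
  refine ⟨_, rulePayoff_mem_chiPBEPayoffs uS hψ hce fun ψ' hψ' => ?_, hle⟩
  obtain ⟨s', α', β', hce', hle'⟩ := exists_isContinuationEq_rulePayoff_le uS uR hμ0 hχ hψ'
  exact ⟨s', α', β', hce', hmax (a := (ψ', s', α', β')) ⟨hψ', hce', hle'⟩⟩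

end Existence

section Limit

variable {A Θ M : Type*} [Fintype A] [Fintype Θ] [Fintype M] [Nonempty A]

theorem tendsto_wStar (hM : Fintype.card Θ ≤ Fintype.card M) (uS : A → ℝ) (uR : A → Θ → ℝ)
    {μ0 : Θ → ℝ} (hμ0 : μ0 ∈ stdSimplex ℝ Θ) :
    Tendsto (fun χ : ℝ => wStar A M uS uR μ0 χ) (𝓝[Set.Ico 0 1] 1) (𝓝 (wHatG uS uR μ0)) := by
  have : Nonempty Θ := (IsDist.exists_pos hμ0).nonempty
  have : Nonempty M := Fintype.card_pos_iff.mp (Fintype.card_pos.trans_le hM)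
  have hlow : ∀ c < wHatG uS uR μ0, ∀ᶠ χ in 𝓝[Set.Ico 0 1] (1 : ℝ),
      ∀ r ∈ chiPBEPayoffs A M uS uR μ0 χ, c < r := fun c hc =>
    nhdsWithin_mono _ Set.Ico_subset_Icc_self
      (eventually_forall_mem_chiPBEPayoffs_lt uS uR hM hμ0 hc)
  have hup : ∀ᶠ χ in 𝓝[Set.Ico 0 1] (1 : ℝ), ∃ r ∈ chiPBEPayoffs A M uS uR μ0 χ,
      r ≤ wHatG uS uR μ0 + (1 - χ) * (2 * (1 + Fintype.card M) * ‖uS‖) := by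
    filter_upwards [self_mem_nhdsWithin, nhdsWithin_le_nhds (lt_mem_nhds one_pos)] with χ hχ hχ0
    exact exists_mem_chiPBEPayoffs_le uS uR hμ0 ⟨hχ0, hχ.2⟩
  have hlim : Tendsto
      (fun χ : ℝ => wHatG uS uR μ0 + (1 - χ) * (2 * (1 + Fintype.card M) * ‖uS‖))
      (𝓝[Set.Ico 0 1] 1) (𝓝 (wHatG uS uR μ0)) :=
    (Continuous.tendsto' (by fun_prop) 1 _ (by ring)).mono_left nhdsWithin_le_nhds
  refine tendsto_order.mpr ⟨fun c hc => ?_, fun c hc => ?_⟩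
  · obtain ⟨d, hcd, hd⟩ := exists_between hc
    filter_upwards [hlow d hd, hup] with χ hlow ⟨r, hr, _⟩
    exact hcd.trans_le (le_csInf ⟨r, hr⟩ fun r hr => (hlow r hr).le)
  · filter_upwards [hlow _ (sub_one_lt _), hup, hlim.eventually (gt_mem_nhds hc)]
      with χ hlow ⟨r, hr, hrle⟩ hlt
    exact (csInf_le ⟨_, fun r hr => (hlow r hr).le⟩ hr).trans_lt (hrle.trans_lt hlt)

theorem wStar_tendsto_wHat_general (hM : Fintype.card Θ ≤ Fintype.card M) (uS : A → ℝ)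
    (uR : A → Θ → ℝ) {μ0 : Θ → ℝ} (hμ0 : μ0 ∈ stdSimplex ℝ Θ) :
    Tendsto (fun χ : ℝ => wStar A M uS uR μ0 χ) (𝓝[Set.Ico 0 1] 1) (𝓝 (wHatG uS uR μ0)) ∧
    (Tendsto (fun χ : ℝ => wStar A M uS uR μ0 χ) (𝓝[Set.Ico 0 1] 1) (𝓝 (vHatG uS uR μ0)) ↔
      wHatG uS uR μ0 = vHatG uS uR μ0) := by
  have hlim := tendsto_wStar (M := M) hM uS uR hμ0
  have : (𝓝[Set.Ico 0 1] (1 : ℝ)).NeBot := by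
    rw [nhdsWithin_Ico_eq_nhdsLT zero_lt_one]
    infer_instance
  exact ⟨hlim, tendsto_nhds_unique hlim, fun h => h ▸ hlim⟩

end Limit

/-- **Strong robustness.** The infimum sender `χ`-PBE payoff converges to `ŵ(μ0)` as
credibility `χ` tends to `1` from below. In particular, it converges to the Bayesian
persuasion value `v̂(μ0)` if and only if `ŵ(μ0) = v̂(μ0)`. -/
theorem wStar_tendsto_wHat
    (A Θ M : Type) [Fintype A] [Fintype Θ] [Fintype M]
    [Nonempty A] [Nonempty Θ] [Nonempty M]
    (hM : 2 * Fintype.card Θ ≤ Fintype.card M)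
    (uS : A → ℝ) (uR : A → Θ → ℝ) (μ0 : Θ → ℝ) (hμ0 : μ0 ∈ stdSimplex ℝ Θ) :
    Tendsto (fun χ : ℝ => wStar A M uS uR μ0 χ)
      (nhdsWithin 1 (Set.Ico (0 : ℝ) 1)) (nhds (wHatG uS uR μ0)) ∧
    (Tendsto (fun χ : ℝ => wStar A M uS uR μ0 χ)
        (nhdsWithin 1 (Set.Ico (0 : ℝ) 1)) (nhds (vHatG uS uR μ0)) ↔
      wHatG uS uR μ0 = vHatG uS uR μ0) :=
  wStar_tendsto_wHat_general (by lia) uS uR hμ0
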